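/- arXiv:1806.07496 — 2 statements merged into one kernel-verified Lean document; each statement's English description precedes it below -/
import Mathlib

section
/- Let q be a prime power, n a positive integer, R : [n]×[n] → [n] a Latin square (for each s the map j ↦ R(s,j) is injective, and for each j the map s ↦ R(s,j) is injective), and 𝒞 ⊆ F_q^n a nonzero F_q-linear code. Define the array code 𝔹_R = { vd_R(T) : T ∈ 𝒞^n }, where vd_R(T)_{R(s,j), j} = c^{(s)}_j for T = (c^{(1)},…,c^{(n)}). Then 𝔹_R is an F_q-linear subspace of F_q^{n×n} of dimension n·dim_{F_q}(𝒞), and its minimum cover distance equals the minimum Hamming distance of 𝒞: d_C(𝔹_R) = d_H(𝒞). -/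
/-- `X` is a cover of the matrix `E`: every nonzero entry lies in a row line
(`Sum.inl i`) or a column line (`Sum.inr j`) belonging to `X`. -/
def IsCover {F : Type*} [Zero F] {m n : ℕ} (E : Matrix (Fin m) (Fin n) F)
    (X : Finset (Fin m ⊕ Fin n)) : Prop :=
  ∀ i j, E i j ≠ 0 → Sum.inl i ∈ X ∨ Sum.inr j ∈ X

/-- The cover weight of a matrix: the minimum cardinality of a cover. -/
noncomputable def coverWeight {F : Type*} [Zero F] {m n : ℕ}
    (E : Matrix (Fin m) (Fin n) F) : ℕ :=
  sInf {k | ∃ X : Finset (Fin m ⊕ Fin n), IsCover E X ∧ X.card = k}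

/-- The Hamming weight of a vector: its number of nonzero coordinates. -/
noncomputable def hWt {K : Type*} [Zero K] {n : ℕ} (c : Fin n → K) : ℕ :=
  Nat.card {j : Fin n // c j ≠ 0}

/-- The minimum cover distance of a (linear) array code, as a set of matrices:
the minimum cover weight of a nonzero codeword. -/
noncomputable def minCoverDist {F : Type*} [Zero F] {n : ℕ}
    (S : Set (Matrix (Fin n) (Fin n) F)) : ℕ :=
  sInf {d | ∃ M ∈ S, M ≠ 0 ∧ coverWeight M = d}

/-- The minimum Hamming distance of a (linear) code, as a set of vectors:
the minimum Hamming weight of a nonzero codeword. -/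
noncomputable def minHammingDist {K : Type*} [Zero K] {n : ℕ}
    (S : Set (Fin n → K)) : ℕ :=
  sInf {d | ∃ c ∈ S, c ≠ 0 ∧ hWt c = d}

/-- Restriction of a matrix to a set of rows (other rows are zeroed out). -/
def rowRestrict {F : Type*} [Zero F] {n : ℕ} (Γ : Finset (Fin n))
    (M : Matrix (Fin n) (Fin n) F) : Matrix (Fin n) (Fin n) F :=
  Matrix.of fun i j => if i ∈ Γ then M i j else 0

/-- Restriction of a matrix to a set of columns (other columns are zeroed out). -/
def colRestrict {F : Type*} [Zero F] {n : ℕ} (Γ : Finset (Fin n))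
    (M : Matrix (Fin n) (Fin n) F) : Matrix (Fin n) (Fin n) F :=
  Matrix.of fun i j => if j ∈ Γ then M i j else 0

/-- `(r, ρ)` cover-locality: every row (resp. column) line has a recovery set of at
most `r + ρ - 1` rows (resp. columns) containing it, on which the restricted code
has minimum cover distance at least `ρ`. -/
def CoverLocality {F : Type*} [Field F] {n : ℕ}
    (B : Submodule F (Matrix (Fin n) (Fin n) F)) (r ρ : ℕ) : Prop :=
  (∀ i : Fin n, ∃ Γ : Finset (Fin n), i ∈ Γ ∧ Γ.card ≤ r + ρ - 1 ∧
    ∀ M ∈ B, rowRestrict Γ M ≠ 0 → ρ ≤ coverWeight (rowRestrict Γ M)) ∧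
  (∀ j : Fin n, ∃ Γ : Finset (Fin n), j ∈ Γ ∧ Γ.card ≤ r + ρ - 1 ∧
    ∀ M ∈ B, colRestrict Γ M ≠ 0 → ρ ≤ coverWeight (colRestrict Γ M))

/-!
Reading a matrix along the transversals `j ↦ (R s j, j)`, one for each `s`, inverts the
vector-diagonal arrangement, because every column of the Latin square `R` is a permutation; this
gives the dimension. A line meets each transversal at most once, because every row of `R` is
injective; hence the Hamming weight of a codeword placed on a transversal bounds the cover weight
from below. The bound is attained by repeating a codeword of minimum weight along all transversals:
the result has constant columns, so the columns in the support of the codeword cover it.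
-/

section CoverWeight

variable {F : Type*} [Zero F] {m n : ℕ}

theorem IsCover.coverWeight_le_card {E : Matrix (Fin m) (Fin n) F} {X : Finset (Fin m ⊕ Fin n)}
    (hX : IsCover E X) : coverWeight E ≤ X.card :=
  Nat.sInf_le ⟨X, hX, rfl⟩

theorem exists_isCover_card_eq_coverWeight (E : Matrix (Fin m) (Fin n) F) :
    ∃ X, IsCover E X ∧ X.card = coverWeight E :=
  Nat.sInf_mem (s := {k | ∃ X, IsCover E X ∧ X.card = k})
    ⟨_, Finset.univ, fun _ _ _ => Or.inl (Finset.mem_univ _), rfl⟩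

theorem hWt_eq_hammingNorm [DecidableEq F] (c : Fin n → F) : hWt c = hammingNorm c := by
  rw [hWt, Nat.card_eq_fintype_card, Fintype.card_subtype, hammingNorm]

theorem IsCover.hWt_le_card {E : Matrix (Fin m) (Fin n) F} {X : Finset (Fin m ⊕ Fin n)}
    (hX : IsCover E X) {r : Fin n → Fin m} (hr : Function.Injective r) :
    hWt (fun j => E (r j) j) ≤ X.card := by
  classical
  rw [hWt_eq_hammingNorm, hammingNorm]
  refine Finset.card_le_card_of_forall_subsingleton
    (fun j x => x = Sum.inl (r j) ∨ x = Sum.inr j) (fun j hj => ?_) ?_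
  · rcases hX (r j) j (Finset.mem_filter.mp hj).2 with hrow | hcol
    · exact ⟨_, hrow, Or.inl rfl⟩
    · exact ⟨_, hcol, Or.inr rfl⟩
  · rintro (i | k) - j ⟨-, hj⟩ j' ⟨-, hj'⟩
    · simp only [Sum.inl.injEq, reduceCtorEq, or_false] at hj hj'
      exact hr (hj.symm.trans hj')
    · simp only [Sum.inr.injEq, reduceCtorEq, false_or] at hj hj'
      exact hj.symm.trans hj'

theorem hWt_le_coverWeight (E : Matrix (Fin m) (Fin n) F) {r : Fin n → Fin m}
    (hr : Function.Injective r) : hWt (fun j => E (r j) j) ≤ coverWeight E := by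
  obtain ⟨X, hX, hcard⟩ := exists_isCover_card_eq_coverWeight E
  exact hcard ▸ hX.hWt_le_card hr

theorem coverWeight_replicateRow_le (c : Fin n → F) :
    coverWeight (Matrix.replicateRow (Fin m) c) ≤ hWt c := by
  classical
  have hX : IsCover (Matrix.replicateRow (Fin m) c)
      (({j | c j ≠ 0} : Finset (Fin n)).map Function.Embedding.inr) :=
    fun i j hij => Or.inr (by simpa using hij)
  rw [hWt_eq_hammingNorm, hammingNorm, ← Finset.card_map Function.Embedding.inr]
  exact hX.coverWeight_le_card

end CoverWeight

section MinimumDistance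

variable {F : Type*} [Zero F] {n : ℕ}

theorem minCoverDist_le_coverWeight {S : Set (Matrix (Fin n) (Fin n) F)}
    {M : Matrix (Fin n) (Fin n) F} (hM : M ∈ S) (hM0 : M ≠ 0) :
    minCoverDist S ≤ coverWeight M :=
  Nat.sInf_le ⟨M, hM, hM0, rfl⟩

theorem exists_coverWeight_eq_minCoverDist {S : Set (Matrix (Fin n) (Fin n) F)}
    (hS : ∃ M ∈ S, M ≠ 0) : ∃ M ∈ S, M ≠ 0 ∧ coverWeight M = minCoverDist S :=
  let ⟨M, hM, hM0⟩ := hS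
  Nat.sInf_mem (s := {d | ∃ M ∈ S, M ≠ 0 ∧ coverWeight M = d}) ⟨_, M, hM, hM0, rfl⟩

theorem minHammingDist_le_hWt {S : Set (Fin n → F)} {c : Fin n → F} (hc : c ∈ S) (hc0 : c ≠ 0) :
    minHammingDist S ≤ hWt c :=
  Nat.sInf_le ⟨c, hc, hc0, rfl⟩

theorem exists_hWt_eq_minHammingDist {S : Set (Fin n → F)} (hS : ∃ c ∈ S, c ≠ 0) :
    ∃ c ∈ S, c ≠ 0 ∧ hWt c = minHammingDist S :=
  let ⟨c, hc, hc0⟩ := hS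
  Nat.sInf_mem (s := {d | ∃ c ∈ S, c ≠ 0 ∧ hWt c = d}) ⟨_, c, hc, hc0, rfl⟩

end MinimumDistance

section Arrangement

variable {ι m n F : Type*} {R : ι → n → m}

theorem replicateRow_self_ne_zero [Zero F] {c : n → F} (hc : c ≠ 0) :
    Matrix.replicateRow n c ≠ 0 := by
  obtain ⟨j, -⟩ := Function.ne_iff.mp hc
  have : Nonempty n := ⟨j⟩
  exact (Matrix.replicateRow_eq_zero c).not.mpr hc

theorem matrix_eq_of_transversals_eq (hR : ∀ j, Function.Surjective fun s => R s j)
    {M N : Matrix m n F} (h : ∀ s j, M (R s j) j = N (R s j) j) : M = N := by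
  ext i j
  obtain ⟨s, rfl⟩ := hR j i
  exact h s j

theorem exists_transversal_ne_zero [Zero F] (hR : ∀ j, Function.Surjective fun s => R s j)
    {M : Matrix m n F} (hM : M ≠ 0) : ∃ s, (fun j => M (R s j) j) ≠ 0 := by
  contrapose! hM
  exact matrix_eq_of_transversals_eq hR fun s => congrFun (hM s)

/-- The vector-diagonal arrangement `vd_R(T)`: the vector `T s` is written along the transversal
`j ↦ (R s j, j)`, and positions on no transversal are filled with `0`. The entries are as intended
when the maps `s ↦ R s j` are injective. -/
noncomputable def vectorDiagonal [Zero F] (R : ι → n → m) (T : ι → n → F) : Matrix m n F :=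
  Matrix.of fun i j => Function.extend (fun s => R s j) (fun s => T s j) 0 i

theorem vectorDiagonal_apply [Zero F] (hR : ∀ j, Function.Injective fun s => R s j)
    (T : ι → n → F) (s : ι) (j : n) : vectorDiagonal R T (R s j) j = T s j :=
  (hR j).extend_apply (fun s => T s j) 0 s

end Arrangement

section VdCode

variable {ι m n F : Type*} [Semiring F]

/-- The linear map reading a matrix along the positions `(r j, j)`. -/
def readTransversal (r : n → m) : Matrix m n F →ₗ[F] n → F where
  toFun M j := M (r j) j
  map_add' _ _ := rfl
  map_smul' _ _ := rfl

/-- The array code `𝔹_R` of a linear code `C`, encoded as the matrices whose reading along each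
transversal `j ↦ (R s j, j)` is a codeword. -/
def vdCode (R : ι → n → m) (C : Submodule F (n → F)) : Submodule F (Matrix m n F) :=
  ⨅ s, C.comap (readTransversal (R s))

variable {R : ι → n → m} {C : Submodule F (n → F)}

theorem mem_vdCode {M : Matrix m n F} : M ∈ vdCode R C ↔ ∀ s, (fun j => M (R s j) j) ∈ C :=
  Submodule.mem_iInf _

theorem coe_vdCode : (vdCode R C : Set (Matrix m n F)) =
    {M | ∃ T : ι → n → F, (∀ s, T s ∈ C) ∧ ∀ s j, M (R s j) j = T s j} := by
  ext M
  refine mem_vdCode.trans ⟨fun h => ⟨_, h, fun _ _ => rfl⟩, ?_⟩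
  rintro ⟨T, hT, hM⟩ s
  exact (funext (hM s) : (fun j => M (R s j) j) = T s) ▸ hT s

theorem vectorDiagonal_mem_vdCode (hR : ∀ j, Function.Injective fun s => R s j) {T : ι → n → F}
    (hT : ∀ s, T s ∈ C) : vectorDiagonal R T ∈ vdCode R C :=
  coe_vdCode.ge ⟨T, hT, vectorDiagonal_apply hR T⟩

theorem replicateRow_mem_vdCode {c : n → F} (hc : c ∈ C) :
    Matrix.replicateRow m c ∈ vdCode R C :=
  mem_vdCode.mpr fun _ => hc

theorem vdCode_ne_bot (R : ι → n → n) {C : Submodule F (n → F)} (hC : C ≠ ⊥) :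
    vdCode R C ≠ ⊥ := by
  obtain ⟨c, hc, hc0⟩ := C.ne_bot_iff.mp hC
  exact (vdCode R C).ne_bot_iff.mpr ⟨_, replicateRow_mem_vdCode hc, replicateRow_self_ne_zero hc0⟩

/-- The linear equivalence between the array code and the tuples of codewords, given by reading
along the transversals; its inverse is the vector-diagonal arrangement. -/
noncomputable def vdCodeEquiv (C : Submodule F (n → F))
    (hR : ∀ j, Function.Bijective fun s => R s j) : vdCode R C ≃ₗ[F] (ι → C) where
  toFun M s := ⟨readTransversal (R s) M.1, mem_vdCode.mp M.2 s⟩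
  map_add' _ _ := rfl
  map_smul' _ _ := rfl
  invFun T := ⟨vectorDiagonal R fun s => T s,
    vectorDiagonal_mem_vdCode (fun j => (hR j).injective) fun s => (T s).2⟩
  left_inv _ := Subtype.ext <| matrix_eq_of_transversals_eq (fun j => (hR j).surjective)
    (vectorDiagonal_apply (fun j => (hR j).injective) _)
  right_inv _ := funext fun s => Subtype.ext <| funext <|
    vectorDiagonal_apply (fun j => (hR j).injective) _ s

theorem finrank_vdCode [StrongRankCondition F] [Fintype ι] [Module.Free F C] [Module.Finite F C]
    (hR : ∀ j, Function.Bijective fun s => R s j) :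
    Module.finrank F (vdCode R C) = Fintype.card ι * Module.finrank F C := by
  rw [(vdCodeEquiv C hR).finrank_eq, Module.finrank_pi_fintype, Finset.sum_const,
    Finset.card_univ, smul_eq_mul]

end VdCode

section VdCodeDistance

variable {ι F : Type*} [Semiring F] {n : ℕ} {R : ι → Fin n → Fin n} {C : Submodule F (Fin n → F)}

theorem minCoverDist_vdCode_le (R : ι → Fin n → Fin n) (hC : C ≠ ⊥) :
    minCoverDist (vdCode R C : Set (Matrix (Fin n) (Fin n) F)) ≤
      minHammingDist (C : Set (Fin n → F)) := by
  obtain ⟨c, hc, hc0, hwt⟩ := exists_hWt_eq_minHammingDist (C.ne_bot_iff.mp hC)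
  calc
    minCoverDist (vdCode R C : Set (Matrix (Fin n) (Fin n) F))
        ≤ coverWeight (Matrix.replicateRow (Fin n) c) :=
      minCoverDist_le_coverWeight (replicateRow_mem_vdCode hc) (replicateRow_self_ne_zero hc0)
    _ ≤ hWt c := coverWeight_replicateRow_le c
    _ = minHammingDist (C : Set (Fin n → F)) := hwt

theorem minHammingDist_le_minCoverDist_vdCode (hrow : ∀ s, Function.Injective (R s))
    (hcol : ∀ j, Function.Surjective fun s => R s j) (hC : C ≠ ⊥) :
    minHammingDist (C : Set (Fin n → F)) ≤
      minCoverDist (vdCode R C : Set (Matrix (Fin n) (Fin n) F)) := by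
  obtain ⟨M, hM, hM0, hwt⟩ :=
    exists_coverWeight_eq_minCoverDist ((vdCode R C).ne_bot_iff.mp (vdCode_ne_bot R hC))
  obtain ⟨s, hs⟩ := exists_transversal_ne_zero hcol hM0
  calc
    minHammingDist (C : Set (Fin n → F)) ≤ hWt (fun j => M (R s j) j) :=
      minHammingDist_le_hWt (mem_vdCode.mp hM s) hs
    _ ≤ coverWeight M := hWt_le_coverWeight M (hrow s)
    _ = minCoverDist (vdCode R C : Set (Matrix (Fin n) (Fin n) F)) := hwt

theorem minCoverDist_vdCode (hrow : ∀ s, Function.Injective (R s))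
    (hcol : ∀ j, Function.Surjective fun s => R s j) (hC : C ≠ ⊥) :
    minCoverDist (vdCode R C : Set (Matrix (Fin n) (Fin n) F)) =
      minHammingDist (C : Set (Fin n → F)) :=
  (minCoverDist_vdCode_le R hC).antisymm (minHammingDist_le_minCoverDist_vdCode hrow hcol hC)

end VdCodeDistance

theorem vd_code_is_linear_dim_and_dist_general
    {n : ℕ} {F : Type*} [Semiring F] [StrongRankCondition F] (R : Fin n → Fin n → Fin n)
    (hR1 : ∀ s, Function.Injective (R s)) (hR2 : ∀ j, Function.Injective (fun s => R s j))
    (C : Submodule F (Fin n → F)) [Module.Free F C] (hC : C ≠ ⊥) :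
    ∃ B : Submodule F (Matrix (Fin n) (Fin n) F),
      (B : Set (Matrix (Fin n) (Fin n) F)) =
        {M | ∃ T : Fin n → (Fin n → F), (∀ s, T s ∈ C) ∧ ∀ s j, M (R s j) j = T s j} ∧
      Module.finrank F B = n * Module.finrank F C ∧
      minCoverDist (B : Set (Matrix (Fin n) (Fin n) F)) =
        minHammingDist (C : Set (Fin n → F)) := by
  have hcol : ∀ j, Function.Bijective fun s => R s j :=
    fun j => Finite.injective_iff_bijective.mp (hR2 j)
  have : Module.Finite F C := Module.rank_lt_aleph0_iff.mp <|
    C.rank_le.trans_lt (Module.rank_lt_aleph0 F (Fin n → F))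
  refine ⟨vdCode R C, coe_vdCode, ?_, minCoverDist_vdCode hR1 (fun j => (hcol j).surjective) hC⟩
  rw [finrank_vdCode hcol, Fintype.card_fin]

/-- for a Latin square `R` and a nonzero linear code `𝒞 ⊆ F_q^n`,
the array code `𝔹_R = { vd_R(T) : T ∈ 𝒞^n }` is an `F_q`-linear subspace of
`F_q^{n×n}` of dimension `n · dim 𝒞`, and its minimum cover distance equals the
minimum Hamming distance of `𝒞`. -/
theorem vd_code_is_linear_dim_and_dist
    (q n : ℕ) (hq : IsPrimePow q) (hn : 0 < n)
    (F : Type) [Field F] [Fintype F] (hcard : Fintype.card F = q)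
    (R : Fin n → Fin n → Fin n)
    (hR1 : ∀ s, Function.Injective (R s))
    (hR2 : ∀ j, Function.Injective (fun s => R s j))
    (C : Submodule F (Fin n → F)) (hC : C ≠ ⊥) :
    ∃ B : Submodule F (Matrix (Fin n) (Fin n) F),
      (B : Set (Matrix (Fin n) (Fin n) F)) =
        {M | ∃ T : Fin n → (Fin n → F), (∀ s, T s ∈ C) ∧ ∀ s j, M (R s j) j = T s j} ∧
      Module.finrank F B = n * Module.finrank F C ∧
      minCoverDist (B : Set (Matrix (Fin n) (Fin n) F)) =
        minHammingDist (C : Set (Fin n → F)) :=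
  vd_code_is_linear_dim_and_dist_general R hR1 hR2 C hC
end

section
/- Let q be a prime power, n, ρ, μ, n_l positive integers with n = μ·n_l, S_1,…,S_μ a partition of the column set [n] with each |S_b| = n_l, and T_1,…,T_μ a partition of the row set [n] with each |T_a| = n_l. Let R : [n]×[n] → [n] be a Latin square that is block-compatible: for all a, b ∈ [μ], all s ∈ [n], and all j, j' ∈ S_b, R(s,j) ∈ T_a if and only if R(s,j') ∈ T_a. Let 𝒞 ⊆ F_q^n be an F_q-linear code such that for every b ∈ [μ], every codeword of 𝒞 whose restriction to S_b is nonzero has at least ρ nonzero coordinates in S_b. Define 𝔹_R = { vd_R(T) : T ∈ 𝒞^n } with vd_R(T)_{R(s,j), j} = c^{(s)}_j. Then 𝔹_R has block-locality with local distance ρ: for every a, b ∈ [μ], every codeword of 𝔹_R whose restriction to the n_l × n_l subarray with rows T_a and columns S_b is nonzero has cover weight at least ρ on that subarray. -/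
/-- Restriction of a matrix to the subarray with rows `Γr` and columns `Γc`
(other entries zeroed out). -/
def blockRestrict {F : Type*} [Zero F] {n : ℕ} (Γr Γc : Finset (Fin n))
    (M : Matrix (Fin n) (Fin n) F) : Matrix (Fin n) (Fin n) F :=
  Matrix.of fun i j => if i ∈ Γr ∧ j ∈ Γc then M i j else 0

/-!
A line contains at most one entry of a partial transversal, so a matrix whose entries along a
partial transversal of size `k` are all nonzero has cover weight at least `k`. If the restriction
of `vd_R(T)` to a subarray is nonzero at `(i, j)`, write `i = R s j`. By block-compatibility the
positions `(R s j', j')`, with `j'` in the column group, all stay in the subarray; they form a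
partial transversal carrying the codeword `T s`, which has at least `ρ` nonzero coordinates there.
-/

section CoverWeight

variable {F : Type*} [Zero F] {m n : ℕ} {E : Matrix (Fin m) (Fin n) F}

theorem isCover_univ : IsCover E Finset.univ :=
  fun i _ _ => Or.inl (Finset.mem_univ (Sum.inl i))

theorem le_coverWeight_iff {k : ℕ} :
    k ≤ coverWeight E ↔ ∀ X, IsCover E X → k ≤ X.card := by
  have covers_nonempty : {k | ∃ X, IsCover E X ∧ X.card = k}.Nonempty := ⟨_, _, isCover_univ, rfl⟩
  rw [coverWeight, le_csInf_iff (OrderBot.bddBelow _) covers_nonempty]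
  exact ⟨fun h X hX => h _ ⟨X, hX, rfl⟩, fun h _ ⟨X, hX, hk⟩ => hk ▸ h X hX⟩

theorem IsCover.card_le_of_injOn {X : Finset (Fin m ⊕ Fin n)} (hX : IsCover E X)
    {ι : Type*} {t : Finset ι} {row : ι → Fin m} {col : ι → Fin n}
    (hrow : Set.InjOn row t) (hcol : Set.InjOn col t) (hE : ∀ x ∈ t, E (row x) (col x) ≠ 0) :
    t.card ≤ X.card := by
  have line_exists : ∀ x ∈ t, ∃ l ∈ X, l = Sum.inl (row x) ∨ l = Sum.inr (col x) := fun x hx =>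
    (hX _ _ (hE x hx)).elim (fun h => ⟨_, h, Or.inl rfl⟩) fun h => ⟨_, h, Or.inr rfl⟩
  refine Finset.card_le_card_of_forall_subsingleton _ line_exists ?_
  rintro (i | j) - x ⟨hx, hxl⟩ y ⟨hy, hyl⟩
  · exact hrow hx hy (by simp_all)
  · exact hcol hx hy (by simp_all)

theorem card_le_coverWeight_of_injOn {ι : Type*} {t : Finset ι} {row : ι → Fin m}
    {col : ι → Fin n} (hrow : Set.InjOn row t) (hcol : Set.InjOn col t)
    (hE : ∀ x ∈ t, E (row x) (col x) ≠ 0) : t.card ≤ coverWeight E :=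
  le_coverWeight_iff.2 fun _ hX => hX.card_le_of_injOn hrow hcol hE

end CoverWeight

section BlockRestrict

variable {F : Type*} [Zero F] {n : ℕ} {Γr Γc : Finset (Fin n)} {M : Matrix (Fin n) (Fin n) F}

theorem blockRestrict_apply_ne_zero_iff {i j : Fin n} :
    blockRestrict Γr Γc M i j ≠ 0 ↔ (i ∈ Γr ∧ j ∈ Γc) ∧ M i j ≠ 0 := by
  simp only [blockRestrict, Matrix.of_apply, ite_ne_right_iff]

theorem blockRestrict_ne_zero_iff :
    blockRestrict Γr Γc M ≠ 0 ↔ ∃ i ∈ Γr, ∃ j ∈ Γc, M i j ≠ 0 := by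
  simp only [ne_eq, ← Matrix.ext_iff, Matrix.zero_apply, not_forall]
  simp only [← ne_eq, blockRestrict_apply_ne_zero_iff, and_assoc, exists_and_left]

theorem natCard_ne_zero_le_coverWeight_blockRestrict {row : Fin n → Fin n}
    (hinj : Set.InjOn row Γc) (hmaps : Set.MapsTo row Γc Γr) :
    Nat.card {j // j ∈ Γc ∧ M (row j) j ≠ 0} ≤ coverWeight (blockRestrict Γr Γc M) := by
  classical
  rw [Nat.subtype_card (Γc.filter fun j => M (row j) j ≠ 0) fun _ => Finset.mem_filter]
  refine card_le_coverWeight_of_injOn (hinj.mono (Finset.filter_subset _ _))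
    (Set.injOn_id _) fun j hj => ?_
  obtain ⟨hjc, hMj⟩ := Finset.mem_filter.1 hj
  exact blockRestrict_apply_ne_zero_iff.2 ⟨⟨hmaps hjc, hjc⟩, hMj⟩

end BlockRestrict

theorem vd_code_block_locality_general {F ι : Type*} [Zero F] {n ρ : ℕ}
    {Γr Γc : Finset (Fin n)} {R : ι → Fin n → Fin n}
    (hinj : ∀ s, Set.InjOn (R s) Γc) (hsurj : ∀ j ∈ Γc, Function.Surjective fun s => R s j)
    (hcompat : ∀ s, ∀ j ∈ Γc, ∀ j' ∈ Γc, R s j ∈ Γr → R s j' ∈ Γr)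
    {C : Set (Fin n → F)}
    (hC : ∀ c ∈ C, (∃ j ∈ Γc, c j ≠ 0) → ρ ≤ Nat.card {j // j ∈ Γc ∧ c j ≠ 0})
    {T : ι → Fin n → F} (hT : ∀ s, T s ∈ C)
    {M : Matrix (Fin n) (Fin n) F} (hM : ∀ s j, M (R s j) j = T s j)
    (hne : blockRestrict Γr Γc M ≠ 0) :
    ρ ≤ coverWeight (blockRestrict Γr Γc M) := by
  obtain ⟨i, hi, j, hj, hMij⟩ := blockRestrict_ne_zero_iff.1 hne
  obtain ⟨s, rfl⟩ := hsurj j hj i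
  have hmaps : Set.MapsTo (R s) Γc Γr := fun j' hj' => hcompat s j hj j' hj' hi
  calc
    ρ ≤ Nat.card {j // j ∈ Γc ∧ T s j ≠ 0} := hC (T s) (hT s) ⟨j, hj, hM s j ▸ hMij⟩
    _ = Nat.card {j // j ∈ Γc ∧ M (R s j) j ≠ 0} := by simp only [hM]
    _ ≤ coverWeight (blockRestrict Γr Γc M) :=
      natCard_ne_zero_le_coverWeight_blockRestrict (hinj s) hmaps

/-- under the hypotheses of the block-compatible Latin-square
construction, the array code `𝔹_R = { vd_R(T) : T ∈ 𝒞^n }` has block-locality with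
local distance `ρ`: every codeword whose restriction to the subarray with rows
`Trow a` and columns `S b` is nonzero has cover weight at least `ρ` on that
subarray. -/
theorem vd_code_block_locality
    (q n ρ μ nl : ℕ) (hq : IsPrimePow q) (hn : 0 < n) (hρ : 0 < ρ)
    (hμ : 0 < μ) (hnl : 0 < nl) (hmul : n = μ * nl)
    (F : Type) [Field F] [Fintype F] (hcard : Fintype.card F = q)
    (S : Fin μ → Finset (Fin n)) (Trow : Fin μ → Finset (Fin n))
    (hScard : ∀ b, (S b).card = nl) (hTcard : ∀ a, (Trow a).card = nl)
    (hSpart : ∀ j : Fin n, ∃! b, j ∈ S b)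
    (hTpart : ∀ i : Fin n, ∃! a, i ∈ Trow a)
    (R : Fin n → Fin n → Fin n)
    (hR1 : ∀ s, Function.Injective (R s))
    (hR2 : ∀ j, Function.Injective (fun s => R s j))
    (hcompat : ∀ (a b : Fin μ) (s : Fin n), ∀ j ∈ S b, ∀ j' ∈ S b,
      (R s j ∈ Trow a ↔ R s j' ∈ Trow a))
    (C : Submodule F (Fin n → F))
    (hCloc : ∀ b : Fin μ, ∀ c ∈ C, (∃ j ∈ S b, c j ≠ 0) →
      ρ ≤ Nat.card {j : Fin n // j ∈ S b ∧ c j ≠ 0}) :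
    ∀ a b : Fin μ, ∀ T : Fin n → (Fin n → F), (∀ s, T s ∈ C) →
      ∀ M : Matrix (Fin n) (Fin n) F, (∀ s j, M (R s j) j = T s j) →
        blockRestrict (Trow a) (S b) M ≠ 0 →
          ρ ≤ coverWeight (blockRestrict (Trow a) (S b) M) :=
  fun a b _ hT _ hM => vd_code_block_locality_general (fun s => (hR1 s).injOn)
    (fun j _ => Finite.surjective_of_injective (hR2 j))
    (fun s j hj j' hj' => (hcompat a b s j hj j' hj').1) (hCloc b) hT hM
end
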